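/- Let (L, ⪯) be a finite meet semilattice with n elements in which some element covers at least two elements of L. Then there exist a GCD closed set S = {x_1, …, x_n} of positive integers with (S, |) order-isomorphic to (L, ⪯) and a real number α > 0 such that the power LCM matrix with ij-entry lcm(x_i, x_j)^α is singular (has determinant 0). -/

import Mathlib

open Classical in
noncomputable def psiAux {L : Type*} [SemilatticeInf L] [Fintype L] (F : L → ℝ) (a : L) : ℝ :=
  F a - ∑ b : {b : L // b < a}, psiAux F b.1
termination_by wellFounded_lt.wrap a
decreasing_by exact b.2

open Classical in
theorem psi_eq {L : Type*} [SemilatticeInf L] [Fintype L] (F : L → ℝ) (a : L) :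
    psiAux F a = F a - ∑ b ∈ Finset.univ.filter (· < a), psiAux F b := by
  rw [psiAux]
  congr 1
  exact (Finset.sum_subtype _ (by simp) _).symm

open Classical in
theorem psi_sum {L : Type*} [SemilatticeInf L] [Fintype L] (F : L → ℝ) (a : L) :
    ∑ b ∈ Finset.univ.filter (· ≤ a), psiAux F b = F a := by
  have : Finset.univ.filter (· ≤ a) = insert a (Finset.univ.filter (· < a)) := by
    ext b; simp [le_iff_eq_or_lt]
  rw [this, Finset.sum_insert (by simp), psi_eq F a]; ring

theorem psi_cont {L : Type*} [SemilatticeInf L] [Fintype L] (F : ℝ → L → ℝ)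
    (hF : ∀ a, Continuous fun t => F t a) (a : L) : Continuous fun t => psiAux (F t) a := by
  classical
  induction a using WellFoundedLT.induction with
  | ind a ih =>
    simp_rw [psi_eq _ a]
    refine (hF a).sub (continuous_finsetSum _ fun b hb => ih b (by simpa using hb))

theorem psi_congr {L : Type*} [SemilatticeInf L] [Fintype L] (F G : L → ℝ) (a : L)
    (h : ∀ b ≤ a, F b = G b) : psiAux F a = psiAux G a := by
  classical
  induction a using WellFoundedLT.induction with
  | ind a ih =>
    rw [psi_eq _ a, psi_eq _ a, h a le_rfl]
    congr 1
    refine Finset.sum_congr rfl fun b hb => ?_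
    have hb : b < a := by simpa using hb
    exact ih b hb fun c hc => h c (hc.trans hb.le)

/-- elements with a unique lower cover -/
theorem psi_tree {L : Type*} [SemilatticeInf L] [Fintype L] (F : L → ℝ) (b m : L)
    (hm : m < b) (hu : ∀ y z, y ⋖ b → z ⋖ b → y = z) :
    ∃ p, p < b ∧ psiAux F b = F b - F p := by
  classical
  obtain ⟨p, -, hp⟩ := exists_le_covBy_of_lt hm
  refine ⟨p, hp.lt, ?_⟩
  rw [psi_eq, ← psi_sum F p]
  congr 2
  ext c
  simp only [Finset.mem_filter, Finset.mem_univ, true_and]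
  constructor
  · intro hc
    obtain ⟨q, hq, hq'⟩ := exists_le_covBy_of_lt hc
    rwa [hu p q hp hq']
  · intro hc
    exact hc.trans_lt hp.lt

theorem det_zero {L : Type*} [SemilatticeInf L] [Fintype L] [DecidableEq L]
    (F u : L → ℝ) (x : L) (hx : psiAux F x = 0) :
    (Matrix.of fun a b => u a * u b * F (a ⊓ b)).det = 0 := by
  classical
  have : (Matrix.of fun a b => u a * u b * F (a ⊓ b)) =
      (Matrix.of fun a c => if c ≤ a then u a else 0) * Matrix.diagonal (psiAux F) *
      (Matrix.of fun a c => if c ≤ a then u a else 0).transpose := by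
    ext a b
    rw [Matrix.mul_apply]
    simp only [Matrix.of_apply, Matrix.mul_diagonal, Matrix.transpose_apply]
    rw [← psi_sum F (a ⊓ b), Finset.mul_sum, Finset.sum_filter]
    refine Finset.sum_congr rfl fun c _ => ?_
    by_cases h1 : c ≤ a <;> by_cases h2 : c ≤ b <;> simp [h1, h2]
    ring
  rw [this, Matrix.det_mul, Matrix.det_mul, Matrix.det_diagonal,
    Finset.prod_eq_zero (Finset.mem_univ x) hx]
  simp

open Classical in
noncomputable def fprod {L : Type*} [SemilatticeInf L] [Fintype L] (q : L → ℕ) (a : L) : ℕ :=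
  ∏ c ∈ Finset.univ.filter (· ≤ a), q c

section
variable {L : Type*} [SemilatticeInf L] [Fintype L] (q : L → ℕ) (hq1 : ∀ c, 1 < q c)
  (hq : ∀ c d, c ≠ d → Nat.Coprime (q c) (q d))

theorem fprod_dvd (a b : L) (h : a ≤ b) : fprod q a ∣ fprod q b := by
  classical
  apply Finset.prod_dvd_prod_of_subset
  intro c; simp only [Finset.mem_filter, Finset.mem_univ, true_and]
  exact fun hc => hc.trans h

theorem q_dvd_fprod (a : L) : q a ∣ fprod q a := by
  classical
  exact Finset.dvd_prod_of_mem _ (by simp)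

include hq1 in
theorem fprod_pos (a : L) : 0 < fprod q a := by
  classical
  exact Finset.prod_pos fun c _ => (hq1 c).trans' one_pos

include hq hq1 in
theorem fprod_le (a b : L) (h : fprod q a ∣ fprod q b) : a ≤ b := by
  classical
  by_contra hn
  have h1 : q a ∣ fprod q b := (q_dvd_fprod q a).trans h
  have h2 : Nat.Coprime (q a) (fprod q b) := by
    apply Nat.Coprime.prod_right
    intro c hc
    apply hq
    rintro rfl
    simp at hc
    exact hn hc
  have := Nat.Coprime.eq_one_of_dvd h2 h1
  have := hq1 a
  omega

include hq in
theorem fprod_gcd (a b : L) : fprod q (a ⊓ b) = Nat.gcd (fprod q a) (fprod q b) := by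
  classical
  have key : ∀ a b : L, fprod q a = fprod q (a ⊓ b) *
      ∏ c ∈ Finset.univ.filter (fun c => c ≤ a ∧ ¬ c ≤ b), q c := by
    intro a b
    unfold fprod
    rw [← Finset.prod_union]
    · congr 1
      ext c; simp only [Finset.mem_filter, Finset.mem_univ, true_and, Finset.mem_union, le_inf_iff]
      tauto
    · rw [Finset.disjoint_left]
      intro c; simp only [Finset.mem_filter, Finset.mem_univ, true_and, le_inf_iff]
      tauto
  rw [key a b, key b a, inf_comm b a, Nat.gcd_mul_left]
  rw [Nat.Coprime.gcd_eq_one, mul_one]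
  apply Nat.Coprime.prod_left
  intro c hc
  apply Nat.Coprime.prod_right
  intro d hd
  apply hq
  rintro rfl
  simp at hc hd
  exact hc.2 hd.1

include hq hq1 in
theorem fprod_lt (a b : L) (h : a < b) : 2 * fprod q a ≤ fprod q b := by
  obtain ⟨k, hk⟩ := fprod_dvd q a b h.le
  have h0 := fprod_pos q hq1 b
  have : k ≠ 1 := by
    rintro rfl
    exact h.not_ge (fprod_le q hq1 hq b a (by simp [hk]))
  have : k ≠ 0 := by
    rintro rfl
    simp [hk] at h0
  rw [hk, mul_comm]
  exact Nat.mul_le_mul_left _ (by omega)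
end

theorem exists_primes (L : Type*) [Fintype L] :
    ∃ p : L → ℕ, (∀ c, (p c).Prime) ∧ Function.Injective p :=
  ⟨fun c => Nat.nth Nat.Prime (Fintype.equivFin L c),
    fun c => Nat.prime_nth_prime _, fun c d h => by
      have := Nat.nth_injective Nat.infinite_setOfPred_prime h
      exact (Fintype.equivFin L).injective (Fin.ext this)⟩

theorem exists_min_x {L : Type*} [SemilatticeInf L] [Fintype L] 
    (x y₁ y₂ : L) (hne : y₁ ≠ y₂) (hcov₁ : y₁ ⋖ x) (hcov₂ : y₂ ⋖ x) :
    ∃ x y₁ y₂ : L, y₁ ≠ y₂ ∧ y₁ ⋖ x ∧ y₂ ⋖ x ∧ 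
      ∀ b < x, ∀ y z, y ⋖ b → z ⋖ b → y = z := by
  obtain ⟨x, ⟨y₁, y₂, h1, h2, h3⟩, hmin⟩ := WellFounded.has_min (wellFounded_lt (α := L))
    {x | ∃ y₁ y₂ : L, y₁ ≠ y₂ ∧ y₁ ⋖ x ∧ y₂ ⋖ x} ⟨x, y₁, y₂, hne, hcov₁, hcov₂⟩
  refine ⟨x, y₁, y₂, h1, h2, h3, fun b hb y z hy hz => ?_⟩
  by_contra h
  exact hmin b ⟨y, z, h, hy, hz⟩ hb

theorem exists_bot' {L : Type*} [SemilatticeInf L] [Fintype L] (x : L) : ∃ m : L, ∀ a, m ≤ a :=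
  ⟨Finset.univ.inf' ⟨x, Finset.mem_univ x⟩ id, fun a => Finset.inf'_le id (Finset.mem_univ a)⟩

/-- positivity at exponent one -/
theorem psi_pos {L : Type*} [SemilatticeInf L] [Fintype L] 
    (x y₁ y₂ : L) (h1 : y₁ ≠ y₂) (h2 : y₁ ⋖ x) (h3 : y₂ ⋖ x)
    (ht : ∀ b < x, ∀ y z, y ⋖ b → z ⋖ b → y = z) (F : L → ℝ)
    (hF : ∀ a, 0 < F a) (hlt : ∀ a b, a < b → 2 * F b ≤ F a) : 0 < psiAux F x := by
  classical
  obtain ⟨m, hm⟩ := exists_bot' x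
  have hneg : ∀ b < x, b ≠ m → psiAux F b ≤ 0 := by
    intro b hb hbm
    obtain ⟨p, hp, he⟩ := psi_tree F b m (lt_of_le_of_ne (hm b) hbm.symm) (ht b hb)
    rw [he]
    have := hlt p b hp
    have := hF b
    linarith
  rw [psi_eq]
  set A := Finset.univ.filter (· ≤ y₁)
  set B := Finset.univ.filter (· ≤ y₂)
  have hle : ∑ b ∈ Finset.univ.filter (· < x), psiAux F b ≤ ∑ b ∈ A ∪ B, psiAux F b := by
    have hsub : A ∪ B ⊆ Finset.univ.filter (· < x) := by
      intro c
      simp only [A, B, Finset.mem_filter, Finset.mem_univ, true_and, Finset.mem_union]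
      rintro (h | h)
      · exact h.trans_lt h2.lt
      · exact h.trans_lt h3.lt
    rw [← Finset.sum_sdiff hsub]
    have : ∑ b ∈ Finset.univ.filter (· < x) \ (A ∪ B), psiAux F b ≤ 0 := by
      apply Finset.sum_nonpos
      intro b hb
      simp only [A, B, Finset.mem_filter, Finset.mem_univ, true_and, Finset.mem_union,
        Finset.mem_sdiff] at hb
      apply hneg b hb.1
      rintro rfl
      exact hb.2 (Or.inl (hm _))
    linarith
  have hun := Finset.sum_union_inter (s₁ := A) (s₂ := B) (f := psiAux F)
  have hAB : A ∩ B = Finset.univ.filter (· ≤ y₁ ⊓ y₂) := by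
    ext c; simp [A, B]
  rw [hAB, psi_sum, psi_sum, psi_sum] at hun
  have l1 : y₁ ⊓ y₂ < y₁ := by
    refine lt_of_le_of_ne inf_le_left fun h => ?_
    have h' : y₁ ≤ y₂ := inf_eq_left.mp h
    exact h2.2 (lt_of_le_of_ne h' h1) h3.lt
  have l2 : y₁ ⊓ y₂ < y₂ := by
    refine lt_of_le_of_ne inf_le_right fun h => ?_
    have h' : y₂ ≤ y₁ := inf_eq_right.mp h
    exact h3.2 (lt_of_le_of_ne h' h1.symm) h2.lt
  have := hlt _ _ l1
  have := hlt _ _ l2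
  have := hF x
  linarith

theorem psi_one {L : Type*} [SemilatticeInf L] [Fintype L] 
    (x y₁ : L) (h2 : y₁ ⋖ x) (ht : ∀ b < x, ∀ y z, y ⋖ b → z ⋖ b → y = z) :
    psiAux (fun _ : L => (1:ℝ)) x = 0 := by
  classical
  obtain ⟨m, hm⟩ := exists_bot' x
  rw [psi_eq, Finset.sum_eq_single m]
  · rw [psi_eq, Finset.sum_eq_zero]
    · simp
    · intro b hb
      simp only [Finset.mem_filter, Finset.mem_univ, true_and] at hb
      exact absurd (hm b) hb.not_ge
  · intro b hb hbm
    simp only [Finset.mem_filter, Finset.mem_univ, true_and] at hb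
    obtain ⟨p, hp, he⟩ := psi_tree (fun _ : L => (1:ℝ)) b m 
      (lt_of_le_of_ne (hm b) hbm.symm) (ht b hb)
    rw [he]; simp
  · intro h
    exact absurd (by simpa using (hm y₁).trans_lt h2.lt) h

/-- Let `L` be a finite meet semilattice in which some element covers at least two
elements.  Then there is a GCD closed set of positive integers, order-isomorphic to `L`
under divisibility, and a real `α > 0` such that its power LCM matrix
`[lcm (f a) (f b) ^ α]` is singular. -/
theorem stmt_16 {L : Type*} [SemilatticeInf L] [Fintype L] [DecidableEq L]
    (x y₁ y₂ : L) (hne : y₁ ≠ y₂) (hcov₁ : y₁ ⋖ x) (hcov₂ : y₂ ⋖ x) :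
    ∃ (f : L → ℕ) (α : ℝ),
      (∀ a, 0 < f a) ∧ Function.Injective f ∧
      (∀ a b, a ≤ b ↔ f a ∣ f b) ∧
      (∀ a b, ∃ c, f c = Nat.gcd (f a) (f b)) ∧
      0 < α ∧
      (Matrix.of fun a b => (Nat.lcm (f a) (f b) : ℝ) ^ α).det = 0 := by
  obtain ⟨x, y₁, y₂, h1, h2, h3, ht⟩ := exists_min_x x y₁ y₂ hne hcov₁ hcov₂
  clear hcov₁ hcov₂ hne
  obtain ⟨p, hp, hpi⟩ := exists_primes L
  let q : ℕ → L → ℕ := fun N c => p c ^ (if c = x then N + 1 else 1)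
  have hq1 : ∀ N c, 1 < q N c := fun N c =>
    Nat.one_lt_pow (by split_ifs <;> omega) (hp c).one_lt
  have hq : ∀ N c d, c ≠ d → Nat.Coprime (q N c) (q N d) := fun N c d h =>
    Nat.Coprime.pow _ _ ((Nat.coprime_primes (hp c) (hp d)).2 fun e => h (hpi e))
  let f : ℕ → L → ℕ := fun N => fprod (q N)
  let F : ℕ → ℝ → L → ℝ := fun N t a => (f N a : ℝ) ^ (-t)
  have hfpos : ∀ N a, (0:ℝ) < f N a := fun N a => by
    exact_mod_cast fprod_pos (q N) (hq1 N) a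
  have hFc : ∀ N a, Continuous fun t => F N t a := fun N a => by
    refine Continuous.rpow continuous_const continuous_neg fun t => Or.inl (hfpos N a).ne'
  have hloc : ∀ N, ∀ b < x, f N b = f 0 b := by
    intro N b hb
    refine Finset.prod_congr rfl fun c hc => ?_
    simp only [Finset.mem_filter, Finset.mem_univ, true_and] at hc
    have : c ≠ x := (hc.trans_lt hb).ne
    simp [q, this]
  have hbig : ∀ N, (2:ℝ) ^ N ≤ f N x := by
    intro N
    have h : q N x ≤ f N x := Nat.le_of_dvd (fprod_pos (q N) (hq1 N) x) (q_dvd_fprod _ x)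
    have h' : 2 ^ N ≤ q N x := by
      simp only [q, if_true]
      calc 2 ^ N ≤ p x ^ N := Nat.pow_le_pow_left (hp x).two_le _
        _ ≤ p x ^ (N+1) := Nat.pow_le_pow_right (hp x).pos (by omega)
    exact_mod_cast h'.trans h
  -- small exponent
  have hc0 : Continuous fun t => psiAux (F 0 t) x - F 0 t x :=
    (psi_cont (F 0) (hFc 0) x).sub (hFc 0 x)
  have hv0 : psiAux (F 0 0) x - F 0 0 x = -1 := by
    have : F 0 0 = fun _ => (1:ℝ) := by funext a; simp [F]
    rw [this, psi_one x y₁ h2 ht]; norm_num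
  obtain ⟨t, ht0, htneg⟩ : ∃ t : ℝ, 0 < t ∧ psiAux (F 0 t) x - F 0 t x < -1/2 := by
    have hev := hc0.continuousAt.eventually_lt (x₀ := (0:ℝ))
      (continuousAt_const (y := (-1/2 : ℝ))) (by simp only [hv0]; norm_num)
    obtain ⟨t, h, ht⟩ := ((hev.filter_mono nhdsWithin_le_nhds).and
      (self_mem_nhdsWithin (s := Set.Ioi (0:ℝ)))).exists
    exact ⟨t, ht, h⟩
  obtain ⟨N, hN⟩ : ∃ N : ℕ, ((2:ℝ) ^ (-t)) ^ N < 1/2 :=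
    exists_pow_lt_of_lt_one (by norm_num)
      (Real.rpow_lt_one_of_one_lt_of_neg (by norm_num) (by linarith))
  have hneg : psiAux (F N t) x < 0 := by
    have e : psiAux (F N t) x - F N t x = psiAux (F 0 t) x - F 0 t x := by
      rw [psi_eq (F N t) x, psi_eq (F 0 t) x, sub_sub_cancel_left, sub_sub_cancel_left]
      congr 1
      refine Finset.sum_congr rfl fun b hb => ?_
      simp only [Finset.mem_filter, Finset.mem_univ, true_and] at hb
      refine psi_congr _ _ _ fun c hc => ?_
      simp only [F, hloc N c (hc.trans_lt hb)]
    have : F N t x < 1/2 := by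
      refine lt_of_le_of_lt ?_ hN
      calc F N t x ≤ ((2:ℝ) ^ N) ^ (-t) :=
            Real.rpow_le_rpow_of_nonpos (by positivity) (hbig N) (by linarith)
        _ = _ := by
          rw [← Real.rpow_natCast, ← Real.rpow_natCast, ← Real.rpow_mul (by norm_num),
            ← Real.rpow_mul (by norm_num), mul_comm]
    linarith
  have hpos : 0 < psiAux (F N 1) x := by
    refine psi_pos x y₁ y₂ h1 h2 h3 ht _ (fun a => Real.rpow_pos_of_pos (hfpos N a) _) ?_
    intro a b hab
    have h := fprod_lt (q N) (hq1 N) (hq N) a b hab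
    have h' : (2:ℝ) * f N a ≤ f N b := by exact_mod_cast h
    simp only [F, Real.rpow_neg_one]
    have ha := hfpos N a
    have hb := hfpos N b
    rw [← div_eq_mul_inv, div_le_iff₀ hb, ← div_eq_inv_mul, le_div_iff₀ ha]
    exact h'
  obtain ⟨α, hα, hz⟩ : (0:ℝ) ∈ (fun s => psiAux (F N s) x) '' Set.uIcc t 1 := by
    apply intermediate_value_uIcc (psi_cont (F N) (hFc N) x).continuousOn
    exact Set.mem_uIcc.2 (Or.inl ⟨hneg.le, hpos.le⟩)
  have hα0 : 0 < α := by
    rcases Set.mem_uIcc.1 hα with h | h <;> linarith [h.1]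
  have hdvd : ∀ a b, a ≤ b ↔ f N a ∣ f N b := fun a b =>
    ⟨fprod_dvd _ a b, fprod_le _ (hq1 N) (hq N) a b⟩
  refine ⟨f N, α, fun a => fprod_pos _ (hq1 N) a, ?_, hdvd,
    fun a b => ⟨a ⊓ b, fprod_gcd _ (hq N) a b⟩, hα0, ?_⟩
  · intro a b h
    exact le_antisymm ((hdvd a b).2 h.dvd) ((hdvd b a).2 h.symm.dvd)
  · rw [← det_zero (F N α) (fun a => (f N a : ℝ) ^ α) x hz]
    congr 2
    funext a b
    have hg : f N (a ⊓ b) = Nat.gcd (f N a) (f N b) := fprod_gcd _ (hq N) a b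
    have hm : (f N (a ⊓ b) : ℝ) * (Nat.lcm (f N a) (f N b) : ℝ) = f N a * f N b := by
      rw [hg]; exact_mod_cast Nat.gcd_mul_lcm _ _
    have hgp := hfpos N (a ⊓ b)
    simp only [F]
    rw [← Real.mul_rpow (hfpos N a).le (hfpos N b).le, ← hm,
      Real.mul_rpow hgp.le (Nat.cast_nonneg _), Real.rpow_neg hgp.le]
    have := (Real.rpow_pos_of_pos hgp α).ne'
    field_simp
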